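/- Let G be an infinite group with G ≠ G' (G is not equal to its derived subgroup) and let A be a ℤG-module with C_G(A) = 1, where ℤ is the ring of integers. If A/C_A(G) is not an Artinian ℤ-module and A/C_A(H) is an Artinian ℤ-module for every proper subgroup H of G, then G is isomorphic to a quasi-cyclic q-group C_{q^∞} for some prime q. -/

import Mathlib

/-- `C_A(H)`: the `R`-submodule of `A` consisting of the elements fixed by every
element of the subgroup `H` of `G`. -/
def moduleCentralizer (R : Type*) [Ring R] {G : Type*} [Group G] (A : Type*)
    [AddCommGroup A] [Module R A] [DistribMulAction G A] [SMulCommClass G R A]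
    (H : Subgroup G) : Submodule R A where
  carrier := {a | ∀ g ∈ H, g • a = a}
  add_mem' := fun {a b} ha hb g hg => by rw [smul_add, ha g hg, hb g hg]
  zero_mem' := fun g _ => smul_zero g
  smul_mem' := fun r a ha g hg => by rw [smul_comm, ha g hg]

/-- The quasi-cyclic (Prüfer) `q`-group `C_{q^∞}`: the `q`-primary component of `ℚ/ℤ`. -/
def PruferGroup (q : ℕ) (hq : q.Prime) :
    AddSubgroup (ℚ ⧸ AddSubgroup.zmultiples (1 : ℚ)) :=
  haveI : Fact q.Prime := ⟨hq⟩
  AddCommGroup.primaryComponent (ℚ ⧸ AddSubgroup.zmultiples (1 : ℚ)) q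

/-!
Since `C_A(H ⊔ K) = C_A(H) ⊓ C_A(K)`, the module `A/C_A(G)` would be Artinian if `G` were the
join of two proper subgroups: `⊤` is join-irreducible among the subgroups of `G`. A finitely
generated group with this property is cyclic, and an infinite cyclic group is the join of its
subgroups of index `2` and `3`; so `G` is not finitely generated. It has no proper subgroup of
finite index either, because such a subgroup and finitely many coset representatives together
generate `G`.

Let `N` be the subgroup generated by `G'` and one element `h`. It is proper and normal, so `G`
acts on the Artinian module `A/C_A(N)`. In an Artinian module over `ℤ` the elements killed by
the annihilator of a given `m` form a finite set, so the orbit of `m` is finite, and then `m` is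
fixed. Thus `h` fixes every `g • a - a`, and a faithful action with this property forces `G` to
be abelian.

Written additively, `G` is now divisible, as it has no proper subgroup of finite index. An
element of prime order `q` yields an embedding of the injective group `C_{q^∞}`, which is then a
direct summand and, by irreducibility of `⊤`, everything; in particular only one prime can
occur. Hence there is no `x` of infinite order: the quotient by `6x`, again divisible and
irreducible, would contain elements of orders `2` and `3`.
-/

open Function

theorem supIrred_top_of_orderIso {α β : Type*} [Lattice α] [OrderTop α] [Lattice β] [OrderTop β]
    (e : α ≃o β) (h : SupIrred (⊤ : α)) : SupIrred (⊤ : β) := by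
  refine ⟨fun hmin ↦ h.not_isMin ?_, fun b c hbc ↦ ?_⟩
  · rwa [← e.isMin_apply, map_top]
  · have hsup : e.symm b ⊔ e.symm c = ⊤ := by rw [← map_sup, hbc, map_top]
    simpa only [map_eq_top_iff] using h.2 hsup

section Group

variable {G : Type*} [Group G]

@[to_additive]
theorem isCyclic_of_fg_of_supIrred_top [hfg : Group.FG G] (h : SupIrred (⊤ : Subgroup G)) :
    IsCyclic G := by
  obtain ⟨S, hS⟩ := Group.fg_def.mp hfg
  have hsup : S.sup Subgroup.zpowers = ⊤ := by
    rw [eq_top_iff, ← hS, Subgroup.closure_le]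
    exact fun x hx ↦ Finset.le_sup (f := Subgroup.zpowers) hx (Subgroup.mem_zpowers x)
  obtain ⟨x, -, hx⟩ := h.finset_sup_eq hsup
  exact isCyclic_iff_exists_zpowers_eq_top.mpr ⟨x, hx⟩

@[to_additive]
theorem not_isCyclic_of_supIrred_top [Infinite G] (h : SupIrred (⊤ : Subgroup G)) :
    ¬ IsCyclic G := by
  intro hcyc
  obtain ⟨x, hx⟩ := isCyclic_iff_exists_zpowers_eq_top.mp hcyc
  have hzpowers (n : ℕ) (hn : n ≠ 1) : Subgroup.zpowers (x ^ n) ≠ ⊤ := by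
    intro htop
    have hmem : x ∈ Subgroup.zpowers (x ^ n) := htop ▸ Subgroup.mem_top x
    have horder : orderOf x = 0 :=
      Infinite.orderOf_eq_zero_of_forall_mem_zpowers fun g ↦ hx ▸ Subgroup.mem_top g
    rw [mem_zpowers_pow_iff, horder, Nat.gcd_zero_right] at hmem
    exact hn hmem
  have hsup : Subgroup.zpowers (x ^ 2) ⊔ Subgroup.zpowers (x ^ 3) = ⊤ := by
    rw [eq_top_iff, ← hx, Subgroup.zpowers_le]
    have hx' : (x ^ 2)⁻¹ * x ^ 3 = x := by rw [pow_succ x 2, inv_mul_cancel_left]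
    have hmem := Subgroup.mul_mem_sup (Subgroup.inv_mem _ (Subgroup.mem_zpowers (x ^ 2)))
      (Subgroup.mem_zpowers (x ^ 3))
    rwa [hx'] at hmem
  exact (h.2 hsup).elim (hzpowers 2 (by decide)) (hzpowers 3 (by decide))

@[to_additive]
theorem exists_subgroup_fg_sup_eq_top (N : Subgroup G) [N.FiniteIndex] :
    ∃ K : Subgroup G, K.FG ∧ K ⊔ N = ⊤ := by
  refine ⟨Subgroup.closure (Set.range fun c : G ⧸ N ↦ c.out),
    (Subgroup.fg_iff _).mpr ⟨_, rfl, Set.finite_range _⟩, eq_top_iff.mpr fun g _ ↦ ?_⟩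
  have hout : (g : G ⧸ N).out⁻¹ * g ∈ N := QuotientGroup.eq.mp (Quotient.out_eq' _)
  have hmem := Subgroup.mul_mem_sup
    (Subgroup.subset_closure (Set.mem_range_self (f := fun c : G ⧸ N ↦ c.out) g)) hout
  rwa [mul_inv_cancel_left] at hmem

@[to_additive]
theorem subgroup_eq_top_of_finiteIndex_of_supIrred_top [Infinite G] (h : SupIrred (⊤ : Subgroup G))
    (N : Subgroup G) [N.FiniteIndex] : N = ⊤ := by
  obtain ⟨K, hK, hsup⟩ := exists_subgroup_fg_sup_eq_top N
  refine (h.2 hsup).resolve_left fun htop ↦ not_isCyclic_of_supIrred_top h ?_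
  have : Group.FG G := Group.fg_def.mpr (htop ▸ hK)
  exact isCyclic_of_fg_of_supIrred_top h

theorem smul_eq_of_finite_orbit {X : Type*} [MulAction G X]
    (hG : ∀ N : Subgroup G, N.FiniteIndex → N = ⊤) {x : X} (hx : (MulAction.orbit G x).Finite)
    (g : G) : g • x = x := by
  have : Finite (MulAction.orbit G x) := hx
  have : Finite (G ⧸ MulAction.stabilizer G x) :=
    .of_equiv _ (MulAction.orbitEquivQuotientStabilizer G x)
  have hstab := hG (MulAction.stabilizer G x) Subgroup.finiteIndex_of_finite_quotient
  exact MulAction.mem_stabilizer_iff.mp (hstab ▸ Subgroup.mem_top g)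

end Group

section Module

variable {R M N : Type*} [Ring R] [AddCommGroup M] [Module R M] [AddCommGroup N] [Module R N]

theorem supIrred_top_of_surjective [Nontrivial N] (hM : SupIrred (⊤ : Submodule R M))
    {f : M →ₗ[R] N} (hf : Surjective f) : SupIrred (⊤ : Submodule R N) := by
  refine ⟨by simp only [isMin_iff_eq_bot, top_ne_bot, not_false_eq_true], fun P Q hPQ ↦ ?_⟩
  have hsup : P.comap f ⊔ Q.comap f = ⊤ := by
    rw [eq_top_iff]
    intro m _
    obtain ⟨p, hp, q, hq, hpq⟩ := Submodule.mem_sup.mp (hPQ ▸ Submodule.mem_top (x := f m))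
    obtain ⟨m', rfl⟩ := hf p
    refine Submodule.mem_sup.mpr ⟨m', hp, m - m', ?_, add_sub_cancel _ _⟩
    rwa [Submodule.mem_comap, map_sub, ← hpq, add_sub_cancel_left]
  refine (hM.2 hsup).imp (fun h ↦ ?_) fun h ↦ ?_
  all_goals exact Submodule.comap_injective_of_surjective hf (h.trans (Submodule.comap_top f).symm)

theorem surjective_of_injective_of_supIrred_top [Nontrivial N] (hN : Module.Baer R N)
    (hM : SupIrred (⊤ : Submodule R M)) {f : N →ₗ[R] M} (hf : Injective f) : Surjective f := by
  obtain ⟨r, hr⟩ := hN.extension_property f hf LinearMap.id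
  have hrf (x : N) : r (f x) = x := LinearMap.congr_fun hr x
  have hsup : f.range ⊔ r.ker = ⊤ := by
    refine eq_top_iff.mpr fun m _ ↦ Submodule.mem_sup.mpr
      ⟨f (r m), f.mem_range_self _, m - f (r m), ?_, add_sub_cancel _ _⟩
    rw [LinearMap.mem_ker, map_sub, hrf, sub_self]
  refine LinearMap.range_eq_top.mp ((hM.2 hsup).resolve_right fun hker ↦ ?_)
  obtain ⟨x, hx⟩ := exists_ne (0 : N)
  rw [← hrf x, LinearMap.ker_eq_top.mp hker, LinearMap.zero_apply] at hx
  exact hx rfl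

theorem exists_comp_eq_of_ker_le {P : Type*} [AddCommGroup P] [Module R P]
    (hN : Module.Baer R N) {f : P →ₗ[R] M} {g : P →ₗ[R] N} (h : f.ker ≤ g.ker) :
    ∃ F : M →ₗ[R] N, F ∘ₗ f = g := by
  have hinj : Injective (f.ker.liftQ f le_rfl) :=
    LinearMap.ker_eq_bot.mp (Submodule.ker_liftQ_eq_bot _ _ _ le_rfl)
  obtain ⟨F, hF⟩ := hN.extension_property _ hinj (f.ker.liftQ g h)
  refine ⟨F, ?_⟩
  rw [← f.ker.liftQ_mkQ f le_rfl, ← LinearMap.comp_assoc, hF, Submodule.liftQ_mkQ]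

theorem isArtinian_quotient_inf (P Q : Submodule R M) [IsArtinian R (M ⧸ P)]
    [IsArtinian R (M ⧸ Q)] : IsArtinian R (M ⧸ P ⊓ Q) := by
  have hker : (P.mkQ.prod Q.mkQ).ker = P ⊓ Q := by
    rw [LinearMap.ker_prod, Submodule.ker_mkQ, Submodule.ker_mkQ]
  refine isArtinian_of_injective ((P ⊓ Q).liftQ (P.mkQ.prod Q.mkQ) hker.ge) ?_
  rw [← LinearMap.ker_eq_bot]
  exact Submodule.ker_liftQ_eq_bot _ _ _ hker.le

theorem finite_of_isFiniteLength (hR : ∀ I : Ideal R, I.IsMaximal → Finite (R ⧸ I))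
    (hM : IsFiniteLength R M) : Finite M := by
  induction hM with
  | of_subsingleton => infer_instance
  | @of_simple_quotient M _ _ P hsimple _ hP =>
    obtain ⟨I, hI, ⟨e⟩⟩ := isSimpleModule_iff_quot_maximal.mp hsimple
    have := hR I hI
    have : Finite (M ⧸ P) := .of_equiv _ e.symm.toEquiv
    exact (finite_iff_addSubgroup_quotient P.toAddSubgroup).mpr ⟨hP, this⟩

end Module

section FiniteResidueFields

variable {R M : Type*} [CommRing R] [AddCommGroup M] [Module R M]

theorem finite_torsionBySet_torsionOf [IsArtinian R M]
    (hR : ∀ I : Ideal R, I.IsMaximal → Finite (R ⧸ I)) (m : M) :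
    Finite (Submodule.torsionBySet R M (Ideal.torsionOf R M m)) := by
  set I := Ideal.torsionOf R M m
  have : IsArtinian R (R ⧸ I) :=
    isArtinian_of_injective _ (Ideal.quotTorsionOfEquivSpanSingleton R M m).injective
  have : IsArtinianRing (R ⧸ I) := isArtinian_of_tower R this
  have hartinian : IsArtinian (R ⧸ I) (Submodule.torsionBySet R M I) :=
    isArtinian_of_tower R inferInstance
  have hnoetherian := IsSemiprimaryRing.isNoetherian_iff_isArtinian.mpr hartinian
  refine finite_of_isFiniteLength (R := R ⧸ I) (fun J hJ ↦ ?_)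
    (isFiniteLength_iff_isNoetherian_isArtinian.mpr ⟨hnoetherian, hartinian⟩)
  have := hR _ (Ideal.comap_isMaximal_of_surjective _ Ideal.Quotient.mk_surjective (K := J))
  exact Finite.of_surjective _
    (Ideal.quotientMap_surjective (H := le_rfl) (Ideal.Quotient.mk_surjective (I := I)))

theorem representation_apply_eq_of_isArtinian {G : Type*} [Group G] [IsArtinian R M]
    (hR : ∀ I : Ideal R, I.IsMaximal → Finite (R ⧸ I))
    (hG : ∀ N : Subgroup G, N.FiniteIndex → N = ⊤) (ρ : Representation R G M) (g : G) (m : M) :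
    ρ g m = m := by
  let : MulAction G M := .compHom M ρ
  have horbit : MulAction.orbit G m ⊆ Submodule.torsionBySet R M (Ideal.torsionOf R M m) := by
    rintro _ ⟨g, rfl⟩
    refine (Submodule.mem_torsionBySet_iff _ _).mpr fun r ↦ ?_
    change r.1 • ρ g m = 0
    rw [← map_smul, (Ideal.mem_torsionOf_iff _ _).mp r.2, map_zero]
  have := finite_torsionBySet_torsionOf hR m
  exact smul_eq_of_finite_orbit hG ((Set.toFinite _).subset horbit) g

end FiniteResidueFields

section DivisibleGroup

variable {B : Type*} [AddCommGroup B]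

theorem surjective_zsmul_of_forall_finiteIndex_eq_top
    (hB : ∀ N : AddSubgroup B, N.FiniteIndex → N = ⊤) {n : ℤ} (hn : n ≠ 0) :
    Surjective fun b : B ↦ n • b := by
  let D := (zsmulAddGroupHom n : B →+ B).range
  intro b
  suffices (b : B ⧸ D) = 0 from (QuotientAddGroup.eq_zero_iff b).mp this
  by_contra hb
  obtain ⟨χ, hχ⟩ := CharacterModule.exists_character_apply_ne_zero_of_ne_zero hb
  let ψ : B →+ AddCircle (1 : ℚ) := (χ : B ⧸ D →+ _).comp (QuotientAddGroup.mk' D)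
  have hψ (y : B) : n • ψ y = 0 := by
    have hy : QuotientAddGroup.mk' D (n • y) = 0 := (QuotientAddGroup.eq_zero_iff _).mpr ⟨y, rfl⟩
    rw [← map_zsmul]
    exact (congrArg χ hy).trans (map_zero χ)
  have : Finite ψ.range := by
    refine (AddCircle.finite_torsion (1 : ℚ) (Int.natAbs_pos.mpr hn)).subset ?_
    rintro _ ⟨y, rfl⟩
    exact natAbs_nsmul_eq_zero.mpr (hψ y)
  have hker : ψ.ker = ⊤ := hB _ (AddSubgroup.finiteIndex_ker ψ)
  exact hχ (DFunLike.congr_fun (AddMonoidHom.ker_eq_top_iff.mp hker) b)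

theorem surjective_zsmul_primaryComponent [DivisibleBy B ℤ] (p : ℕ) [hp : Fact p.Prime] {n : ℤ}
    (hn : n ≠ 0) : Surjective fun b : AddCommGroup.primaryComponent B p ↦ n • b := by
  rintro ⟨b, k, hk⟩
  obtain ⟨v, rfl⟩ := DivisibleBy.surjective_smul B ℤ hn b
  have hfin : FiniteMultiplicity (p : ℤ) n :=
    Int.finiteMultiplicity_iff.mpr ⟨by simpa using hp.out.ne_one, hn⟩
  obtain ⟨m, hm, hpm⟩ := hfin.exists_eq_pow_mul_and_not_dvd
  set e := multiplicity (p : ℤ) n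
  have hcoprime : IsCoprime m ((p : ℤ) ^ k) :=
    ((Nat.prime_iff_prime_int.mp hp.out).coprime_iff_not_dvd.mpr hpm).symm.pow_right
  obtain ⟨c, d, hcd⟩ := hcoprime
  have hk' : (p : ℤ) ^ k • n • v = 0 := by
    rw [← hk, ← natCast_zsmul, Nat.cast_pow]
  refine ⟨⟨(c * m) • v, k + e, ?_⟩, Subtype.ext ?_⟩
  · calc p ^ (k + e) • (c * m) • v = c • (p : ℤ) ^ k • (p ^ e * m) • v := by
          rw [← natCast_zsmul]
          module
      _ = 0 := by rw [← hm, hk', smul_zero]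
  · calc n • (c * m) • v = (c * m + d * p ^ k) • n • v - d • (p : ℤ) ^ k • n • v := by module
      _ = n • v := by rw [hcd, hk', one_smul, smul_zero, sub_zero]

theorem addOrderOf_mk_zmultiples_nsmul {x : B} (hx : addOrderOf x = 0) (n : ℕ) :
    addOrderOf (x : B ⧸ AddSubgroup.zmultiples (n • x)) = n := by
  refine Nat.dvd_right_iff_eq.mp fun k ↦ ?_
  rw [addOrderOf_dvd_iff_nsmul_eq_zero, ← QuotientAddGroup.mk_nsmul, QuotientAddGroup.eq_zero_iff]
  refine ⟨fun ⟨t, ht⟩ ↦ ?_, fun ⟨t, ht⟩ ↦ ⟨t, ?_⟩⟩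
  · have hzero : (k - t * n : ℤ) • x = 0 := by
      rw [sub_smul, mul_smul, natCast_zsmul, natCast_zsmul, sub_eq_zero]
      exact ht.symm
    rw [← addOrderOf_dvd_iff_zsmul_eq_zero, hx, Nat.cast_zero, zero_dvd_iff, sub_eq_zero] at hzero
    exact Int.natCast_dvd_natCast.mp (hzero ▸ Dvd.intro_left t rfl)
  · change (t : ℤ) • n • x = k • x
    rw [natCast_zsmul, smul_smul, ht, mul_comm]

end DivisibleGroup

section Prufer

theorem mem_zmultiples_of_addOrderOf_dvd {𝕜 : Type*} [Field 𝕜] [LinearOrder 𝕜]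
    [IsStrictOrderedRing 𝕜] {p : 𝕜} [Fact (0 < p)] {u v : AddCircle p} (hv : addOrderOf v ≠ 0)
    (h : addOrderOf u ∣ addOrderOf v) : u ∈ AddSubgroup.zmultiples v := by
  obtain ⟨t, ht⟩ := h
  have hu := left_ne_zero_of_mul (ht ▸ hv)
  have ht0 := right_ne_zero_of_mul (ht ▸ hv)
  obtain ⟨b, -, -, hb⟩ := (AddCircle.addOrderOf_eq_pos_iff (Nat.pos_of_ne_zero hu)).mp rfl
  obtain ⟨a, -, ha, hav⟩ := (AddCircle.addOrderOf_eq_pos_iff (Nat.pos_of_ne_zero hv)).mp rfl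
  obtain ⟨c, d, hcd⟩ := Nat.isCoprime_iff_coprime.mpr ha
  refine AddSubgroup.mem_zmultiples_iff.mpr ⟨b * t * c, ?_⟩
  rw [← hav, ← hb, ← AddCircle.coe_zsmul, ← sub_eq_zero, ← AddCircle.coe_sub,
    AddCircle.coe_eq_zero_iff]
  refine ⟨-(b * t * d), ?_⟩
  have hcd' : (c * a + d * addOrderOf v : 𝕜) = 1 := mod_cast hcd
  have ht' : (addOrderOf v : 𝕜) = addOrderOf u * t := mod_cast ht
  rw [ht'] at hcd' ⊢
  simp only [zsmul_eq_mul]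
  push_cast
  field_simp
  linear_combination (-b : 𝕜) * p * hcd'

theorem exists_addOrderOf_eq_prime_pow {q : ℕ} {hq : q.Prime} (v : PruferGroup q hq) :
    ∃ k : ℕ, addOrderOf v = q ^ k := by
  have : Fact q.Prime := ⟨hq⟩
  obtain ⟨k, hk⟩ := exists_addOrderOf_eq_prime_pow_iff.mpr v.2
  exact ⟨k, (AddSubgroup.addOrderOf_coe v).symm.trans hk⟩

theorem exists_pruferGroup_addOrderOf_eq {q : ℕ} (hq : q.Prime) :
    ∃ u : PruferGroup q hq, addOrderOf u = q := by
  have hu : addOrderOf ((1 / q : ℚ) : AddCircle (1 : ℚ)) = q :=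
    AddCircle.addOrderOf_period_div hq.pos
  refine ⟨⟨((1 / q : ℚ) : AddCircle (1 : ℚ)), 1, ?_⟩, (AddSubgroup.addOrderOf_coe _).symm.trans hu⟩
  rw [pow_one]
  exact addOrderOf_dvd_iff_nsmul_eq_zero.mp hu.dvd

theorem mem_zmultiples_of_addOrderOf_eq_prime {q : ℕ} {hq : q.Prime} {u v : PruferGroup q hq}
    (hu : addOrderOf u = q) (hv : v ≠ 0) : u ∈ AddSubgroup.zmultiples v := by
  obtain ⟨k, hk⟩ := exists_addOrderOf_eq_prime_pow v
  have hk0 : k ≠ 0 := by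
    rintro rfl
    exact hv (AddMonoid.addOrderOf_eq_one_iff.mp hk)
  rw [← AddSubgroup.addOrderOf_coe] at hu hk
  have hdvd : addOrderOf (u : AddCircle (1 : ℚ)) ∣ addOrderOf (v : AddCircle (1 : ℚ)) := by
    rw [hu, hk]
    exact dvd_pow_self q hk0
  obtain ⟨m, hm⟩ := AddSubgroup.mem_zmultiples_iff.mp
    (mem_zmultiples_of_addOrderOf_dvd (hk ▸ pow_ne_zero k hq.ne_zero) hdvd)
  exact AddSubgroup.mem_zmultiples_iff.mpr ⟨m, Subtype.ext hm⟩

theorem injective_of_apply_ne_zero {B : Type*} [AddCommGroup B] {q : ℕ} {hq : q.Prime}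
    {u : PruferGroup q hq} (hu : addOrderOf u = q) {f : PruferGroup q hq →ₗ[ℤ] B}
    (hf : f u ≠ 0) : Injective f := by
  refine (injective_iff_map_eq_zero f).mpr fun v hv ↦ ?_
  by_contra hv0
  obtain ⟨m, rfl⟩ :=
    AddSubgroup.mem_zmultiples_iff.mp (mem_zmultiples_of_addOrderOf_eq_prime hu hv0)
  exact hf (by rw [map_zsmul, hv, smul_zero])

theorem baer_pruferGroup {q : ℕ} (hq : q.Prime) : Module.Baer ℤ (PruferGroup q hq) := by
  have : Fact q.Prime := ⟨hq⟩
  let : DivisibleBy (PruferGroup q hq) ℤ :=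
    divisibleByOfSMulRightSurj _ _ fun hn ↦ surjective_zsmul_primaryComponent q hn
  exact .of_divisible _

theorem nonempty_pruferGroup_addEquiv {B : Type*} [AddCommGroup B] [DivisibleBy B ℤ]
    (hB : SupIrred (⊤ : Submodule ℤ B)) {q : ℕ} (hq : q.Prime) {x : B} (hx : addOrderOf x = q) :
    Nonempty (PruferGroup q hq ≃+ B) := by
  obtain ⟨u, hu⟩ := exists_pruferGroup_addOrderOf_eq hq
  have hker : (LinearMap.toSpanSingleton ℤ _ u).ker ≤ (LinearMap.toSpanSingleton ℤ B x).ker := by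
    intro n hn
    rw [LinearMap.mem_ker, LinearMap.toSpanSingleton_apply,
      ← addOrderOf_dvd_iff_zsmul_eq_zero] at hn ⊢
    rwa [hx, ← hu]
  obtain ⟨f, hf⟩ := exists_comp_eq_of_ker_le (.of_divisible B) hker
  have hfu : f u = x := by
    simpa only [LinearMap.comp_apply, LinearMap.toSpanSingleton_apply_one] using
      LinearMap.congr_fun hf 1
  have hx0 : x ≠ 0 := fun h ↦ hq.ne_one (by rw [← hx, h, addOrderOf_zero])
  have hinj : Injective f := injective_of_apply_ne_zero hu (hfu ▸ hx0)
  have : Nontrivial (PruferGroup q hq) :=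
    nontrivial_of_ne u 0 fun h ↦ hx0 (by rw [← hfu, h, map_zero])
  have hsurj := surjective_of_injective_of_supIrred_top (baer_pruferGroup hq) hB hinj
  exact ⟨(LinearEquiv.ofBijective f ⟨hinj, hsurj⟩).toAddEquiv⟩

theorem eq_of_addOrderOf_eq_prime {B : Type*} [AddCommGroup B] [DivisibleBy B ℤ]
    (hB : SupIrred (⊤ : Submodule ℤ B)) {p q : ℕ} (hp : p.Prime) (hq : q.Prime) {x y : B}
    (hx : addOrderOf x = p) (hy : addOrderOf y = q) : p = q := by
  obtain ⟨e⟩ := nonempty_pruferGroup_addEquiv hB hp hx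
  obtain ⟨k, hk⟩ := exists_addOrderOf_eq_prime_pow (e.symm y)
  rw [e.symm.addOrderOf_eq, hy] at hk
  exact ((Nat.prime_dvd_prime_iff_eq hq hp).mp (hq.dvd_of_dvd_pow hk.dvd)).symm

theorem addOrderOf_ne_zero_of_supIrred_top {B : Type*} [AddCommGroup B] [DivisibleBy B ℤ]
    (hB : SupIrred (⊤ : Submodule ℤ B)) (x : B) : addOrderOf x ≠ 0 := by
  intro hx
  let π := QuotientAddGroup.mk' (AddSubgroup.zmultiples (6 • x))
  have hπ : Surjective π := QuotientAddGroup.mk'_surjective _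
  have hx6 : addOrderOf (π x) = 6 := addOrderOf_mk_zmultiples_nsmul hx 6
  have hexists {n : ℕ} (hn : n ∣ 6) : ∃ y : B ⧸ AddSubgroup.zmultiples (6 • x), addOrderOf y = n :=
    ⟨_, addOrderOf_nsmul_addOrderOf_sub (hx6.trans_ne (by decide)) (hn.trans hx6.symm.dvd)⟩
  have : Nontrivial (B ⧸ AddSubgroup.zmultiples (6 • x)) :=
    nontrivial_of_ne (π x) 0 fun h ↦ by simp [h] at hx6
  let := hπ.divisibleBy π fun b n ↦ map_zsmul π n b
  have hsupIrred := supIrred_top_of_surjective hB (f := π.toIntLinearMap) hπ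
  obtain ⟨y, hy⟩ := hexists (show 2 ∣ 6 by decide)
  obtain ⟨z, hz⟩ := hexists (show 3 ∣ 6 by decide)
  exact absurd (eq_of_addOrderOf_eq_prime hsupIrred Nat.prime_two Nat.prime_three hy hz) (by decide)

theorem exists_pruferGroup_addEquiv {B : Type*} [AddCommGroup B] [Infinite B]
    (hB : SupIrred (⊤ : AddSubgroup B)) :
    ∃ (q : ℕ) (hq : q.Prime), Nonempty (PruferGroup q hq ≃+ B) := by
  let : DivisibleBy B ℤ := divisibleByOfSMulRightSurj _ _ fun hn ↦
    surjective_zsmul_of_forall_finiteIndex_eq_top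
      (fun N _ ↦ addSubgroup_eq_top_of_finiteIndex_of_supIrred_top hB N) hn
  have hB' := supIrred_top_of_orderIso AddSubgroup.toIntSubmodule hB
  obtain ⟨x, hx⟩ := exists_ne (0 : B)
  obtain ⟨q, hq, hqx⟩ := Nat.exists_prime_and_dvd (mt AddMonoid.addOrderOf_eq_one_iff.mp hx)
  exact ⟨q, hq, nonempty_pruferGroup_addEquiv hB' hq
    (addOrderOf_nsmul_addOrderOf_sub (addOrderOf_ne_zero_of_supIrred_top hB' x) hqx)⟩

end Prufer

section ModuleCentralizer

variable {R G A : Type*} [Group G] [AddCommGroup A] [DistribMulAction G A]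

theorem mul_comm_of_smul_smul_sub (hfaith : ∀ g : G, (∀ a : A, g • a = a) → g = 1)
    (hfix : ∀ (g h : G) (a : A), h • (g • a - a) = g • a - a) (g h : G) : g * h = h * g := by
  rw [← inv_mul_eq_one]
  refine hfaith _ fun a ↦ ?_
  have hgh := hfix g h a
  have hhg := hfix h g a
  rw [smul_sub, sub_eq_iff_eq_add] at hgh hhg
  rw [mul_smul, inv_smul_eq_iff, mul_smul, mul_smul, hgh, hhg]
  abel

section Ring

variable [Ring R] [Module R A] [SMulCommClass G R A]

theorem moduleCentralizer_bot : moduleCentralizer R A (⊥ : Subgroup G) = ⊤ := by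
  refine eq_top_iff.mpr fun a _ g hg ↦ ?_
  rw [Subgroup.mem_bot.mp hg, one_smul]

theorem moduleCentralizer_sup (H K : Subgroup G) :
    moduleCentralizer R A (H ⊔ K) = moduleCentralizer R A H ⊓ moduleCentralizer R A K := by
  ext a
  exact sup_le_iff (a := H) (b := K) (c := MulAction.stabilizer G a)

theorem supIrred_top_of_not_isArtinian
    (hG : ¬ IsArtinian R (A ⧸ moduleCentralizer R A (⊤ : Subgroup G)))
    (hH : ∀ H : Subgroup G, H ≠ ⊤ → IsArtinian R (A ⧸ moduleCentralizer R A H)) :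
    SupIrred (⊤ : Subgroup G) := by
  refine ⟨fun hmin ↦ hG ?_, fun H K hHK ↦ ?_⟩
  · rw [hmin.eq_bot, moduleCentralizer_bot]
    infer_instance
  · by_contra! hproper
    have := hH H hproper.1
    have := hH K hproper.2
    rw [← hHK, moduleCentralizer_sup] at hG
    exact hG (isArtinian_quotient_inf _ _)

theorem smul_mem_moduleCentralizer {N : Subgroup G} [hN : N.Normal] {a : A}
    (ha : a ∈ moduleCentralizer R A N) (g : G) : g • a ∈ moduleCentralizer R A N := by
  intro n hn
  have hconj := ha (g⁻¹ * n * g) (by simpa only [inv_inv] using hN.conj_mem n hn g⁻¹)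
  rwa [mul_smul, mul_smul, inv_smul_eq_iff] at hconj

end Ring

section CommRing

variable [CommRing R] [Module R A] [SMulCommClass G R A]

theorem smul_sub_mem_moduleCentralizer (hR : ∀ I : Ideal R, I.IsMaximal → Finite (R ⧸ I))
    (hG : ∀ N : Subgroup G, N.FiniteIndex → N = ⊤) (N : Subgroup G) [N.Normal]
    [IsArtinian R (A ⧸ moduleCentralizer R A N)] (g : G) (a : A) :
    g • a - a ∈ moduleCentralizer R A N := by
  let ρ := (Representation.ofDistribMulAction R G A).quotient (moduleCentralizer R A N)
    fun g _ ha ↦ smul_mem_moduleCentralizer ha g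
  exact (Submodule.Quotient.eq _).mp
    (representation_apply_eq_of_isArtinian hR hG ρ g (Submodule.Quotient.mk a))

theorem smul_smul_sub_eq_of_supIrred_top (hR : ∀ I : Ideal R, I.IsMaximal → Finite (R ⧸ I))
    [Infinite G] (hirred : SupIrred (⊤ : Subgroup G)) (hG' : commutator G ≠ ⊤)
    (hH : ∀ H : Subgroup G, H ≠ ⊤ → IsArtinian R (A ⧸ moduleCentralizer R A H)) (g h : G) (a : A) :
    h • (g • a - a) = g • a - a := by
  let N := Subgroup.zpowers h ⊔ commutator G
  have hN : N ≠ ⊤ := fun htop ↦ (hirred.2 htop).elim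
    (fun hh ↦ not_isCyclic_of_supIrred_top hirred (isCyclic_iff_exists_zpowers_eq_top.mpr ⟨h, hh⟩))
    hG'
  have : N.Normal := .of_commutator_le G le_sup_right
  have := hH N hN
  exact smul_sub_mem_moduleCentralizer hR
    (fun K _ ↦ subgroup_eq_top_of_finiteIndex_of_supIrred_top hirred K) N g a h
    (Subgroup.mem_sup_left (Subgroup.mem_zpowers h))

end CommRing

end ModuleCentralizer

theorem artinian_int_proper_subgroups_prufer_general {R G A : Type*} [CommRing R]
    (hR : ∀ I : Ideal R, I.IsMaximal → Finite (R ⧸ I)) [Group G] [Infinite G]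
    [AddCommGroup A] [Module R A] [DistribMulAction G A] [SMulCommClass G R A]
    (hG' : commutator G ≠ ⊤)
    (hfaith : ∀ g : G, (∀ a : A, g • a = a) → g = 1)
    (hG : ¬ IsArtinian R (A ⧸ moduleCentralizer R A (⊤ : Subgroup G)))
    (hH : ∀ H : Subgroup G, H ≠ ⊤ → IsArtinian R (A ⧸ moduleCentralizer R A H)) :
    ∃ (q : ℕ) (hq : q.Prime), Nonempty (G ≃* Multiplicative (PruferGroup q hq)) := by
  have hirred := supIrred_top_of_not_isArtinian hG hH
  have hcomm (g h : G) : g * h = h * g := mul_comm_of_smul_smul_sub hfaith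
    (smul_smul_sub_eq_of_supIrred_top hR hirred hG' hH) g h
  let : CommGroup G := { mul_comm := hcomm }
  obtain ⟨q, hq, ⟨e⟩⟩ :=
    exists_pruferGroup_addEquiv (supIrred_top_of_orderIso Subgroup.toAddSubgroup hirred)
  exact ⟨q, hq, ⟨MulEquiv.toAdditiveLeft.symm e.symm⟩⟩

/-- Theorem 2.1 (case `R = ℤ`): let `A` be a `ℤG`-module where `G` is an infinite group
with `G ≠ G'` acting faithfully (`C_G(A) = 1`). If `A/C_A(G)` is not an Artinian
`ℤ`-module and `A/C_A(H)` is an Artinian `ℤ`-module for every proper subgroup `H` of `G`,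
then `G` is isomorphic to a quasi-cyclic `q`-group for some prime `q`. -/
theorem artinian_int_proper_subgroups_prufer (G : Type*) [Group G] [Infinite G]
    (A : Type*) [AddCommGroup A] [DistribMulAction G A]
    (hG' : commutator G ≠ ⊤)
    (hfaith : ∀ g : G, (∀ a : A, g • a = a) → g = 1)
    (hG : ¬ IsArtinian ℤ (A ⧸ moduleCentralizer ℤ A (⊤ : Subgroup G)))
    (hH : ∀ H : Subgroup G, H ≠ ⊤ → IsArtinian ℤ (A ⧸ moduleCentralizer ℤ A H)) :
    ∃ (q : ℕ) (hq : q.Prime), Nonempty (G ≃* Multiplicative (PruferGroup q hq)) :=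
  artinian_int_proper_subgroups_prufer_general (fun _ hI ↦ Ring.HasFiniteQuotients.finiteQuotient
    (Ring.ne_bot_of_isMaximal_of_not_isField hI Int.not_isField)) hG' hfaith hG hH
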